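/- arXiv:2505.17523 — 2 statements merged into one kernel-verified Lean document; each statement's English description precedes it below -/
import Mathlib

section
/- Suppose T ⊆ 𝔹 satisfies T̃ = T. (Then for every β ∈ 𝔹 − T one has T_𝔭 ≠ 𝔹_𝔭 = T̃_𝔭 fails, i.e. T̃_𝔭 = T_𝔭 ≠ 𝔹_𝔭, so n_β is defined and σ^{n_β}β ∈ 𝔹 − T.) Then the minimal cone satisfies 𝒞^min_T = { Σ_{β ∈ 𝔹−T} ℓ_β e_β ∈ ℚ^{𝔹−T} : p^{n_β} ℓ_{σ^{n_β}β} ≥ ℓ_β for all β ∈ 𝔹 − T }. -/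
/- Setting: `B` is the finite nonempty set 𝔹 equipped with a permutation `σ` (Frobenius),
and `p` is a prime.  Weights live in `ℚ^𝔹 = (B → ℚ)`.  The orbits `𝔹_𝔭` of `σ` are the sets
`orbit σ β`, and for `T ⊆ 𝔹` we have `T_𝔭 = T ∩ orbit σ β`. -/

open scoped Classical

noncomputable section

namespace GO

variable {B : Type*} [Fintype B] [DecidableEq B]

/-- The standard basis vector `e_β` of `ℚ^𝔹`. -/
def e (β : B) : B → ℚ := fun τ => if τ = β then 1 else 0

/-- `β'` lies in the `σ`-orbit of `β`. -/
def sameOrbit (σ : Equiv.Perm B) (β β' : B) : Prop := ∃ n : ℕ, (σ ^ n) β = β'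

/-- The `σ`-orbit `𝔹_𝔭` of `β`. -/
def orbit (σ : Equiv.Perm B) (β : B) : Set B := {τ | sameOrbit σ β τ}

/-- `|𝔹_𝔭|`, the cardinality of the orbit of `β`. -/
def orbitCard (σ : Equiv.Perm B) (β : B) : ℕ := (orbit σ β).ncard

/-- For `β`, `β'` in the same orbit: the unique `n` with `0 < n ≤ |𝔹_𝔭|` and `σ^n β' = β`,
realized as the least positive `n` with `σ^n β' = β`. -/
def steps (σ : Equiv.Perm B) (β' β : B) : ℕ := sInf {n : ℕ | 0 < n ∧ (σ ^ n) β' = β}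

/-- For `β`, `β'` in the same orbit: the unique `n` with `0 ≤ n < |𝔹_𝔭|` and `σ^n β = β'`. -/
def steps0 (σ : Equiv.Perm B) (β β' : B) : ℕ := sInf {n : ℕ | (σ ^ n) β = β'}

/-- `h_β^{β'} = -e_β + p^n e_{β'}` where `β = σ^n β'` with `0 < n ≤ |𝔹_𝔭|`. -/
def hvec (σ : Equiv.Perm B) (p : ℕ) (β β' : B) : B → ℚ :=
  -(e β) + ((p : ℚ) ^ steps σ β' β) • e β'

/-- `b_β^{β'} = e_β + p^n e_{β'}` where `β = σ^n β'` with `0 < n ≤ |𝔹_𝔭|`. -/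
def bvec (σ : Equiv.Perm B) (p : ℕ) (β β' : B) : B → ℚ :=
  (e β) + ((p : ℚ) ^ steps σ β' β) • e β'

/-- `h_β = -e_β + p e_{σ⁻¹ β}`. -/
def hsimple (σ : Equiv.Perm B) (p : ℕ) (β : B) : B → ℚ := -(e β) + (p : ℚ) • e (σ⁻¹ β)

/-- `b_β = e_β + p e_{σ⁻¹ β}`. -/
def bsimple (σ : Equiv.Perm B) (p : ℕ) (β : B) : B → ℚ := (e β) + (p : ℚ) • e (σ⁻¹ β)

/-- The `ℚ^{≥0}`-cone generated by a set `S` of vectors: all finite nonnegative rational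
linear combinations of elements of `S`. -/
def cone {V : Type*} [AddCommMonoid V] [Module ℚ V] (S : Set V) : Set V :=
  {x | ∃ (n : ℕ) (c : Fin n → ℚ) (v : Fin n → V),
    (∀ i, 0 ≤ c i) ∧ (∀ i, v i ∈ S) ∧ x = ∑ i, c i • v i}

/-- A chain in `T` (automatically contained in a single orbit, so this is the notion of a
chain in `T_𝔭` for `T_𝔭 ⊊ 𝔹_𝔭`): `C = {σ^{-i}β : 0 ≤ i ≤ m} ⊆ T` with `σβ ∉ T` and
`σ^{-m-1}β ∉ T`. -/
def IsChainIn (σ : Equiv.Perm B) (T : Set B) (C : Set B) : Prop :=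
  ∃ (β : B) (m : ℕ), σ β ∉ T ∧ (σ⁻¹ ^ (m + 1)) β ∉ T ∧
    (∀ i ≤ m, (σ⁻¹ ^ i) β ∈ T) ∧ C = {τ | ∃ i ≤ m, τ = (σ⁻¹ ^ i) β}

/-- `C̃` for a chain `C`: equals `C` if `m` is odd (i.e. `|C| = m+1` is even), and
`C ∪ {σ^{-m-1}β} = C ∪ σ⁻¹(C)` if `m` is even (i.e. `|C|` odd). -/
def chainExt (σ : Equiv.Perm B) (C : Set B) : Set B :=
  if Odd C.ncard then C ∪ (⇑σ⁻¹ '' C) else C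

/-- `T̃ = ⋃_𝔭 T̃_𝔭`: the union of `T` with the extensions `C̃` of all chains `C` in `T`.
(For orbits with `T_𝔭 = 𝔹_𝔭` there are no chains and `T̃_𝔭 = 𝔹_𝔭 = T_𝔭`.) -/
def tilde (σ : Equiv.Perm B) (T : Set B) : Set B :=
  T ∪ ⋃ (C : Set B) (_ : IsChainIn σ T C), chainExt σ C

/-- `μ_β`: the least `i > 0` with `σ^i β ∉ T` if `T_𝔭 ≠ 𝔹_𝔭`, and `0` if `T_𝔭 = 𝔹_𝔭`. -/
def mu (σ : Equiv.Perm B) (T : Set B) (β : B) : ℕ :=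
  if orbit σ β ⊆ T then 0 else sInf {i : ℕ | 0 < i ∧ (σ ^ i) β ∉ T}

/-- `n_β`: the least `i > 0` with `σ^i β ∉ T̃` (meaningful when `T̃_𝔭 ≠ 𝔹_𝔭`). -/
def nn (σ : Equiv.Perm B) (T : Set B) (β : B) : ℕ :=
  sInf {i : ℕ | 0 < i ∧ (σ ^ i) β ∉ tilde σ T}

/-- `ν_β`: the least `i ≥ 0` with `σ^{-i} β ∉ T` (meaningful when `T_𝔭 ≠ 𝔹_𝔭`). -/
def nu (σ : Equiv.Perm B) (T : Set B) (β : B) : ℕ :=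
  sInf {i : ℕ | (σ⁻¹ ^ i) β ∉ T}

/-- `𝒯(T_𝔭) = (𝔹_𝔭 − T̃_𝔭) ∪ σ(T̃_𝔭 − T_𝔭)`, taken globally (union over all `𝔭`). -/
def Tscr (σ : Equiv.Perm B) (T : Set B) : Set B :=
  (tilde σ T)ᶜ ∪ (⇑σ '' (tilde σ T \ T))

/-- The generating set `⋃_𝔭 𝒢(T_𝔭)`:
`{h_β^{β'} : β ∈ ℋ(T_𝔭), β' ∈ 𝒯(T_𝔭)} ∪ {±b_β : β ∈ T_𝔭}` over all `𝔭`. -/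
def Dgen (σ : Equiv.Perm B) (p : ℕ) (T : Set B) : Set (B → ℚ) :=
  {v | ∃ β β', β ∉ T ∧ β' ∈ Tscr σ T ∧ sameOrbit σ β β' ∧ v = hvec σ p β β'}
  ∪ {v | ∃ β ∈ T, v = bsimple σ p β ∨ v = -(bsimple σ p β)}

/-- The cone `𝒟_T`. -/
def D (σ : Equiv.Perm B) (p : ℕ) (T : Set B) : Set (B → ℚ) := cone (Dgen σ p T)

/-- `h_{σ^{n_β}β}^{β} = -e_{σ^{n_β}β} + p^{n_β} e_β`. -/
def fH (σ : Equiv.Perm B) (p : ℕ) (T : Set B) (β : B) : B → ℚ :=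
  -(e ((σ ^ nn σ T β) β)) + ((p : ℚ) ^ nn σ T β) • e β

/-- `b_{σ^{n_β}β}^{β} = e_{σ^{n_β}β} + p^{n_β} e_β`. -/
def fB (σ : Equiv.Perm B) (p : ℕ) (T : Set B) (β : B) : B → ℚ :=
  (e ((σ ^ nn σ T β) β)) + ((p : ℚ) ^ nn σ T β) • e β

/-- The generating set `⋃_𝔭 𝒢′(T_𝔭)`:
if `𝔹_𝔭 − T̃_𝔭 ≠ ∅` it is `{h_{σ^{n_β}β}^β : β ∈ 𝔹_𝔭 − T̃_𝔭} ∪ {−b_{σ^{n_β}β}^β : β ∈ T̃_𝔭 − T_𝔭}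
∪ {±b_β : β ∈ T_𝔭}`, and if `𝔹_𝔭 = T̃_𝔭` it is `{−e_β : β ∈ 𝔹_𝔭 − T_𝔭} ∪ {±b_β : β ∈ T_𝔭}`. -/
def D'gen (σ : Equiv.Perm B) (p : ℕ) (T : Set B) : Set (B → ℚ) :=
  {v | ∃ β, β ∉ tilde σ T ∧ v = fH σ p T β}
  ∪ {v | ∃ β, β ∈ tilde σ T ∧ β ∉ T ∧ ¬ orbit σ β ⊆ tilde σ T ∧ v = -(fB σ p T β)}
  ∪ {v | ∃ β, β ∉ T ∧ orbit σ β ⊆ tilde σ T ∧ v = -(e β)}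
  ∪ {v | ∃ β ∈ T, v = bsimple σ p β ∨ v = -(bsimple σ p β)}

/-- The cone `𝒟′_T`. -/
def D' (σ : Equiv.Perm B) (p : ℕ) (T : Set B) : Set (B → ℚ) := cone (D'gen σ p T)

/-- `f_β(T)` for `β ∉ T`: `h_{σ^{n_β}β}^β` if `β ∈ 𝔹_𝔭 − T̃_𝔭`; `−b_{σ^{n_β}β}^β` if
`β ∈ T̃_𝔭 − T_𝔭` and `𝔹_𝔭 ≠ T̃_𝔭`; and `−(1+p^{|𝔹_𝔭|}) e_β` if `𝔹_𝔭 = T̃_𝔭`. -/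
def fvec (σ : Equiv.Perm B) (p : ℕ) (T : Set B) (β : B) : B → ℚ :=
  if orbit σ β ⊆ tilde σ T then -((1 + (p : ℚ) ^ orbitCard σ β) • e β)
  else if β ∈ tilde σ T then -(fB σ p T β) else fH σ p T β

/-- `𝔹(T) = ⋃_𝔭 𝔹_𝔭(T)`: `β ∈ 𝔹(T)` iff `β ∉ T`, the set `𝔹_𝔭 − T̃_𝔭` is nonempty, and
`𝔹_𝔭 − T̃_𝔭 ≠ {β}` (this encodes all three cases of the definition of `𝔹_𝔭(T)`). -/
def BT (σ : Equiv.Perm B) (T : Set B) : Set B :=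
  {β | β ∉ T ∧ (orbit σ β \ tilde σ T).Nonempty ∧ orbit σ β \ tilde σ T ≠ {β}}

/-- The sign function `ε_T : 𝔹 → {−1,0,1}`. -/
def epsT (σ : Equiv.Perm B) (T : Set B) (β : B) : ℚ :=
  if orbit σ β ⊆ T then 0
  else if β ∈ tilde σ T then (-1 : ℚ) ^ (mu σ T β - 1) else 1

/-- `L^ε[β, β'](κ) = Σ_{0 ≤ i ≤ n} ε(σ^iβ) p^i k_{σ^iβ}`, where `β' = σ^n β` with
`0 ≤ n < |𝔹_𝔭|`. -/
def Lfun (σ : Equiv.Perm B) (p : ℕ) (ε : B → ℚ) (β β' : B) (κ : B → ℚ) : ℚ :=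
  ∑ i ∈ Finset.range (steps0 σ β β' + 1), ε ((σ ^ i) β) * (p : ℚ) ^ i * κ ((σ ^ i) β)

/-- `L^ε[β] = L^ε[β, σ⁻¹β]`. -/
def Lfun1 (σ : Equiv.Perm B) (p : ℕ) (ε : B → ℚ) (β : B) (κ : B → ℚ) : ℚ :=
  Lfun σ p ε β (σ⁻¹ β) κ

/-- `L_{T,β}` for `β ∈ 𝔹 − T`: `L^{ε_T}[σ^{μ_β}β]` if `β ∈ 𝔹 − T̃`, and
`L^{ε_T}[β, σ^{μ_β−1}β]` if `β ∈ T̃ − T`. -/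
def LT (σ : Equiv.Perm B) (p : ℕ) (T : Set B) (β : B) (κ : B → ℚ) : ℚ :=
  if β ∈ tilde σ T then Lfun σ p (epsT σ T) β ((σ ^ (mu σ T β - 1)) β) κ
  else Lfun1 σ p (epsT σ T) ((σ ^ mu σ T β) β) κ

/-- `ε_{T,f_β}`: negates `ε_T` on `{β, σβ, …, σ^{μ_β−1}β}`. -/
def epsTf (σ : Equiv.Perm B) (T : Set B) (β τ : B) : ℚ :=
  if ∃ i < mu σ T β, τ = (σ ^ i) β then -(epsT σ T τ) else epsT σ T τ

/-- `L_{T,f_β,τ}` for `β ∈ 𝔹(T)` and `τ ∈ 𝔹 − (T ∪ {σ^{n_β}β})`, with `β′ = σ^{n_β}β` and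
`β̃ = σ^{μ_{β′}}β′`. -/
def LTf (σ : Equiv.Perm B) (p : ℕ) (T : Set B) (β τ : B) (κ : B → ℚ) : ℚ :=
  if τ = β then
    (if β ∈ tilde σ T then
      Lfun1 σ p (epsTf σ T β) ((σ ^ mu σ T ((σ ^ nn σ T β) β)) ((σ ^ nn σ T β) β)) κ
    else
      Lfun σ p (epsTf σ T β) β (σ⁻¹ ((σ ^ mu σ T ((σ ^ nn σ T β) β)) ((σ ^ nn σ T β) β))) κ)
  else
    (if τ ∈ tilde σ T then LT σ p T τ κ
     else Lfun1 σ p (epsTf σ T β) ((σ ^ mu σ T τ) τ) κ)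

/-- `𝒟_{T,f_β} = {κ : L_{T,f_β,τ}(κ) ≥ 0 for all τ ∈ 𝔹 − (T ∪ {σ^{n_β}β})}`. -/
def Df (σ : Equiv.Perm B) (p : ℕ) (T : Set B) (β : B) : Set (B → ℚ) :=
  {κ | ∀ τ, τ ∉ T → τ ≠ (σ ^ nn σ T β) β → 0 ≤ LTf σ p T β τ κ}

/-- `i_T : ℚ^𝔹 → ℚ^{𝔹−T}`, the linear map with `i_T(e_β) = 0` if `T_𝔭 = 𝔹_𝔭` and
`i_T(e_β) = (−p)^{ν_β} e_{σ^{−ν_β}β}` otherwise. -/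
def iT (σ : Equiv.Perm B) (p : ℕ) (T : Set B) (κ : B → ℚ) : {β : B // β ∉ T} → ℚ :=
  fun β₀ => ∑ β : B, κ β *
    (if orbit σ β ⊆ T then 0
     else if (σ⁻¹ ^ nu σ T β) β = β₀.1 then (-(p : ℚ)) ^ nu σ T β else 0)

/-- Restriction to `ℚ^{𝔹−T}` of a vector of `ℚ^𝔹` (used for vectors supported on `𝔹 − T`). -/
def res (T : Set B) (v : B → ℚ) : {β : B // β ∉ T} → ℚ := fun β => v β.1

/-- The generating set `𝒢^{T-red}(T) = ⋃_𝔭 𝒢_𝔭^{T-red}(T)` of the reduced cone. -/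
def Gred (σ : Equiv.Perm B) (p : ℕ) (T : Set B) : Set ({β : B // β ∉ T} → ℚ) :=
  {v | ∃ β, β ∉ tilde σ T ∧ v = res T (fH σ p T β)}
  ∪ {v | ∃ β, β ∈ tilde σ T ∧ β ∉ T ∧ ¬ orbit σ β ⊆ tilde σ T ∧ v = res T (-(fB σ p T β))}
  ∪ {v | ∃ β, β ∉ T ∧ orbit σ β ⊆ tilde σ T ∧ v = res T (-(e β))}

/-- The minimal cone `𝒞^min_T = i_T(𝒟_T ∩ ⋂_{β ∈ 𝔹(T)} 𝒟_{T,f_β}) ⊆ ℚ^{𝔹−T}`. -/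
def Cmin (σ : Equiv.Perm B) (p : ℕ) (T : Set B) : Set ({β : B // β ∉ T} → ℚ) :=
  iT σ p T '' (D σ p T ∩ {κ | ∀ β ∈ BT σ T, κ ∈ Df σ p T β})

/-- `g_β`: `b_β` if `β ∈ T_𝔭`; `−e_β` if `β ∈ T̃_𝔭 − T_𝔭` and `𝔹_𝔭 = T̃_𝔭`;
`−b_{σ^{n_β}β}^β` if `β ∈ T̃_𝔭 − T_𝔭` and `𝔹_𝔭 ≠ T̃_𝔭`; `h_{σ^{n_β}β}^β` if `β ∈ 𝔹_𝔭 − T̃_𝔭`. -/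
def gvec (σ : Equiv.Perm B) (p : ℕ) (T : Set B) (β : B) : B → ℚ :=
  if β ∈ T then bsimple σ p β
  else if orbit σ β ⊆ tilde σ T then -(e β)
  else if β ∈ tilde σ T then -(fB σ p T β)
  else fH σ p T β

/-- The map `σ̄ : β ↦ σ^{n_β} β`. -/
def sigbar (σ : Equiv.Perm B) (T : Set B) (β : B) : B := (σ ^ nn σ T β) β

/-- `h_β = -e_β + p e_{σ⁻¹β}` as an element of `ℤ^𝔹`. -/
def hZ (σ : Equiv.Perm B) (p : ℕ) (β : B) : B → ℤ :=
  fun τ => (if τ = β then -1 else 0) + (if τ = σ⁻¹ β then (p : ℤ) else 0)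

end GO

end

/-!
Write `σ̄ s = σ^{μ_s} s` for the first return map of `σ` to `𝔹 − T`. If `T̃ = T`, then every
chain in `T` has even length, so every return time `μ_s = n_s` is odd and `ε_T (σ^i s) = (-1)^i`
for `s ∉ T` and `i < μ_s`. Hence `L_{T,f_s,s}(κ) = -i_T(κ)_s + p^{n_s} i_T(κ)_{σ̄ s}`, so
membership in `𝒟_{T,f_s}` yields the inequality at `s`. When `s` is the only point of its orbit
outside `T`, the inequality says `i_T(κ)_s ≥ 0`, which holds on the generators of `𝒟_T`.

Conversely, let `κ` be the extension by zero of a solution `ℓ`. Chaining the inequalities once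
around an orbit gives `ℓ ≥ 0`, so `κ` lies in `𝒟_T`, which contains every `e_s` with `s ∉ T`
because `h_s^s` is a positive multiple of it. For `τ ≠ β` the only negative term of
`L_{T,f_β,τ}(κ)` is the one at `β`, and the inequality at `β` says that the term at `σ̄ β`
outweighs it.
-/

namespace GO

section Cone

variable {V : Type*} [AddCommMonoid V] [Module ℚ V] {S : Set V}

theorem cone_eq_hull (S : Set V) : cone S = PointedCone.hull ℚ S := by
  ext x
  rw [SetLike.mem_coe, Submodule.mem_span_set']
  constructor
  · rintro ⟨n, c, v, hc, hv, rfl⟩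
    exact ⟨n, fun i => ⟨c i, hc i⟩, fun i => ⟨v i, hv i⟩, rfl⟩
  · rintro ⟨n, c, v, rfl⟩
    exact ⟨n, fun i => c i, fun i => v i, fun i => (c i).2, fun i => (v i).2, rfl⟩

theorem nonneg_of_mem_cone {φ : V →ₗ[ℚ] ℚ} (hφ : ∀ v ∈ S, 0 ≤ φ v) {x : V} (hx : x ∈ cone S) :
    0 ≤ φ x := by
  rw [cone_eq_hull] at hx
  exact Submodule.span_le (p := (PointedCone.positive ℚ ℚ).comap φ).2 hφ hx

end Cone

section Orbit

variable {B : Type*} {σ : Equiv.Perm B}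

theorem pow_apply_pow_apply (σ : Equiv.Perm B) (k i : ℕ) (s : B) :
    (σ ^ k) ((σ ^ i) s) = (σ ^ (i + k)) s := by
  rw [← Equiv.Perm.mul_apply, ← pow_add, add_comm]

theorem inv_pow_apply_pow_apply (σ : Equiv.Perm B) {k i : ℕ} (h : k ≤ i) (s : B) :
    (σ⁻¹ ^ k) ((σ ^ i) s) = (σ ^ (i - k)) s := by
  rw [inv_pow, Equiv.Perm.inv_eq_iff_eq, pow_apply_pow_apply, Nat.sub_add_cancel h]

theorem pow_minimalPeriod_apply (σ : Equiv.Perm B) (s : B) :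
    (σ ^ Function.minimalPeriod σ s) s = s := by
  rw [← Equiv.Perm.iterate_eq_pow, Function.iterate_minimalPeriod]

theorem pow_apply_ne_of_lt_minimalPeriod {i j : ℕ} (hi : i < Function.minimalPeriod σ s)
    (hj : j < Function.minimalPeriod σ s) (hij : j ≠ i) : (σ ^ j) s ≠ (σ ^ i) s := by
  simp only [← Equiv.Perm.iterate_eq_pow]
  exact fun h => hij (Function.iterate_injOn_Iio_minimalPeriod hj hi h)

variable [Finite B]

theorem sameOrbit_iff_sameCycle {s t : B} : sameOrbit σ s t ↔ σ.SameCycle s t :=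
  ⟨fun ⟨n, hn⟩ => ⟨n, by simpa using hn⟩,
    fun h => let ⟨n, _, hn⟩ := h.exists_pow_eq'; ⟨n, hn⟩⟩

theorem minimalPeriod_pos (σ : Equiv.Perm B) (s : B) : 0 < Function.minimalPeriod σ s :=
  Function.minimalPeriod_pos_of_mem_periodicPts (σ.injective.mem_periodicPts s)

theorem steps_self (σ : Equiv.Perm B) (s : B) : steps σ s s = Function.minimalPeriod σ s := by
  have hmem : Function.minimalPeriod σ s ∈ {n : ℕ | 0 < n ∧ (σ ^ n) s = s} :=
    ⟨minimalPeriod_pos σ s, pow_minimalPeriod_apply σ s⟩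
  refine le_antisymm (Nat.sInf_le hmem) (le_csInf ⟨_, hmem⟩ ?_)
  rintro n ⟨hn, hns⟩
  refine Function.IsPeriodicPt.minimalPeriod_le hn ?_
  rwa [Function.IsPeriodicPt, Equiv.Perm.iterate_eq_pow]

theorem steps_pos {s t : B} (h : sameOrbit σ s t) : 0 < steps σ s t := by
  obtain ⟨n, rfl⟩ := h
  exact (Nat.sInf_mem (s := {k | 0 < k ∧ (σ ^ k) s = (σ ^ n) s})
    ⟨n + orderOf σ, Nat.add_pos_right n (orderOf_pos σ), by simp [pow_add, pow_orderOf_eq_one]⟩).1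

theorem steps0_inv_add_one {s t : B} (h : sameOrbit σ s t) :
    steps0 σ s (σ⁻¹ t) + 1 = steps σ s t := by
  rw [steps, ← Nat.sInf_add (n := 1) (steps_pos h), steps0]
  simp only [Nat.succ_pos, true_and, pow_succ', Equiv.Perm.mul_apply, Equiv.Perm.eq_inv_iff_eq]

theorem Lfun_inv_eq_sum (p : ℕ) (ε κ : B → ℚ) {s t : B} (h : sameOrbit σ s t) :
    Lfun σ p ε s (σ⁻¹ t) κ =
      ∑ i ∈ Finset.range (steps σ s t), ε ((σ ^ i) s) * (p : ℚ) ^ i * κ ((σ ^ i) s) := by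
  rw [Lfun, steps0_inv_add_one h]

end Orbit

section FirstReturn

variable {B : Type*} {σ : Equiv.Perm B} {T : Set B} {s t : B} {i j : ℕ}

/-- The first return map `s ↦ σ^{μ_s} s` of `σ` to the complement of `T`. -/
noncomputable def firstReturn (σ : Equiv.Perm B) (T : Set B) (s : B) : B := (σ ^ mu σ T s) s

theorem pow_apply_mem_of_lt_mu (hi : 0 < i) (h : i < mu σ T s) : (σ ^ i) s ∈ T := by
  unfold mu at h
  split_ifs at h
  · exact absurd h (Nat.not_lt_zero i)
  · by_contra hiT
    exact Nat.notMem_of_lt_sInf h ⟨hi, hiT⟩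

theorem mu_le (hi : 0 < i) (h : (σ ^ i) s ∉ T) : mu σ T s ≤ i :=
  not_lt.1 fun hlt => h (pow_apply_mem_of_lt_mu hi hlt)

theorem nu_pow_apply (hs : s ∉ T) (hi : i < mu σ T s) : nu σ T ((σ ^ i) s) = i := by
  have hmem : (σ⁻¹ ^ i) ((σ ^ i) s) ∉ T := by
    simpa [inv_pow_apply_pow_apply σ le_rfl] using hs
  refine le_antisymm (Nat.sInf_le hmem) (le_csInf ⟨i, hmem⟩ fun k hk => ?_)
  by_contra! hki
  rw [Set.mem_ofPred_eq, inv_pow_apply_pow_apply σ hki.le] at hk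
  exact hk (pow_apply_mem_of_lt_mu (by omega) (by omega))

theorem injOn_pow_apply (hs : s ∉ T) :
    Set.InjOn (fun i => (σ ^ i) s) (Set.Iio (mu σ T s)) :=
  Set.LeftInvOn.injOn (f₁' := nu σ T) fun _ hi => nu_pow_apply hs hi

theorem eq_of_pow_apply_eq_pow_apply (hs : s ∉ T) (ht : t ∉ T) (hi : i < mu σ T s)
    (hj : j < mu σ T t) (h : (σ ^ i) s = (σ ^ j) t) : s = t := by
  have hij : i = j := by rw [← nu_pow_apply hs hi, h, nu_pow_apply ht hj]
  subst hij
  exact (σ ^ i).injective h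

theorem sameOrbit_firstReturn_firstReturn (s : B) :
    sameOrbit σ s (firstReturn σ T (firstReturn σ T s)) :=
  ⟨_, (pow_apply_pow_apply σ _ _ s).symm⟩

variable [Finite B]

theorem not_orbit_pow_apply_subset (hs : s ∉ T) (i : ℕ) : ¬ orbit σ ((σ ^ i) s) ⊆ T :=
  fun h => hs (h (sameOrbit_iff_sameCycle.2 (Equiv.Perm.sameCycle_pow_left.2 (.refl _ _))))

theorem mu_pos_and_firstReturn_notMem (hs : s ∉ T) :
    0 < mu σ T s ∧ firstReturn σ T s ∉ T := by
  have hne : {i : ℕ | 0 < i ∧ (σ ^ i) s ∉ T}.Nonempty :=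
    ⟨orderOf σ, orderOf_pos σ, by simpa [pow_orderOf_eq_one] using hs⟩
  have hsub : ¬ orbit σ s ⊆ T := not_orbit_pow_apply_subset hs 0
  rw [firstReturn, mu, if_neg hsub]
  exact Nat.sInf_mem hne

theorem mu_pos (hs : s ∉ T) : 0 < mu σ T s := (mu_pos_and_firstReturn_notMem hs).1

theorem firstReturn_notMem (hs : s ∉ T) : firstReturn σ T s ∉ T :=
  (mu_pos_and_firstReturn_notMem hs).2

theorem mu_pow_apply (hs : s ∉ T) (hi : i < mu σ T s) : mu σ T ((σ ^ i) s) = mu σ T s - i := by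
  have hmem : 0 < mu σ T s - i ∧ (σ ^ (mu σ T s - i)) ((σ ^ i) s) ∉ T := by
    rw [pow_apply_pow_apply, Nat.add_sub_cancel' hi.le]
    exact ⟨Nat.sub_pos_of_lt hi, firstReturn_notMem hs⟩
  have hmu : mu σ T ((σ ^ i) s) = sInf {k | 0 < k ∧ (σ ^ k) ((σ ^ i) s) ∉ T} :=
    if_neg (not_orbit_pow_apply_subset hs i)
  refine le_antisymm (mu_le hmem.1 hmem.2) ?_
  rw [hmu]
  refine le_csInf ⟨_, hmem⟩ fun k ⟨hk, hkT⟩ => ?_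
  rw [pow_apply_pow_apply] at hkT
  have := mu_le (by omega) hkT
  omega

theorem firstReturn_injOn : Set.InjOn (firstReturn σ T) Tᶜ := by
  intro s hs t ht h
  wlog hle : mu σ T s ≤ mu σ T t generalizing s t
  · exact (this ht hs h.symm (le_of_not_ge hle)).symm
  have hst : (σ ^ (mu σ T t - mu σ T s)) t = s := by
    apply (σ ^ mu σ T s).injective
    rw [pow_apply_pow_apply, Nat.sub_add_cancel hle]
    exact h.symm
  rcases Nat.eq_zero_or_pos (mu σ T t - mu σ T s) with h0 | hpos
  · simpa [h0] using hst.symm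
  · have := mu_le hpos (hst.symm ▸ hs)
    have := mu_pos (σ := σ) hs
    omega

theorem firstReturn_induction {motive : ℕ → B → Prop} (zero : ∀ s ∉ T, motive 0 s)
    (add_mu : ∀ s ∉ T, ∀ k, motive k (firstReturn σ T s) → motive (mu σ T s + k) s)
    (k : ℕ) (hs : s ∉ T) (hk : (σ ^ k) s ∉ T) : motive k s := by
  induction k using Nat.strong_induction_on generalizing s with
  | _ k ih =>
    rcases Nat.eq_zero_or_pos k with rfl | hpos
    · exact zero s hs
    · obtain ⟨m, rfl⟩ := Nat.exists_eq_add_of_le (mu_le hpos hk)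
      refine add_mu s hs m (ih m (by have := mu_pos (σ := σ) hs; omega) (firstReturn_notMem hs) ?_)
      rwa [firstReturn, pow_apply_pow_apply]

theorem eq_of_sameOrbit_of_firstReturn_eq (hs : s ∉ T) (ht : t ∉ T) (hst : sameOrbit σ s t)
    (h : firstReturn σ T s = s) : t = s := by
  obtain ⟨k, rfl⟩ := hst
  refine firstReturn_induction (motive := fun k s => firstReturn σ T s = s → (σ ^ k) s = s)
    (fun s _ _ => rfl) (fun s _ k ih h => ?_) k hs ht h
  rw [h] at ih
  rw [← pow_apply_pow_apply]
  exact (congrArg (σ ^ k) h).trans (ih h)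

theorem steps_firstReturn_firstReturn (hs : s ∉ T) (hne : firstReturn σ T s ≠ s) :
    steps σ s (firstReturn σ T (firstReturn σ T s)) =
      mu σ T s + mu σ T (firstReturn σ T s) := by
  have ht := firstReturn_notMem (σ := σ) hs
  have hmem : 0 < mu σ T s + mu σ T (firstReturn σ T s) ∧
      (σ ^ (mu σ T s + mu σ T (firstReturn σ T s))) s = firstReturn σ T (firstReturn σ T s) :=
    ⟨Nat.add_pos_left (mu_pos hs) _, (pow_apply_pow_apply σ _ _ s).symm⟩
  refine le_antisymm (Nat.sInf_le hmem) (le_csInf ⟨_, hmem⟩ ?_)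
  rintro k ⟨hk, hks⟩
  have hkT : (σ ^ k) s ∉ T := hks ▸ firstReturn_notMem ht
  obtain ⟨m, rfl⟩ := Nat.exists_eq_add_of_le (mu_le hk hkT)
  rw [← pow_apply_pow_apply] at hks hkT
  have hm : m ≠ 0 := by
    rintro rfl
    exact hne (firstReturn_injOn ht hs hks.symm)
  exact Nat.add_le_add_left (mu_le (Nat.pos_of_ne_zero hm) hkT) _

theorem add_mu_lt_minimalPeriod {β τ : B} (hβ : β ∉ T) (hτ : τ ∉ T) (hne : β ≠ τ)
    (hi : i < Function.minimalPeriod σ (firstReturn σ T τ))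
    (hiβ : (σ ^ i) (firstReturn σ T τ) = β) :
    i + mu σ T β < Function.minimalPeriod σ (firstReturn σ T τ) := by
  set P := Function.minimalPeriod σ (firstReturn σ T τ)
  have hP : (σ ^ (P - i)) β = firstReturn σ T τ := by
    rw [← hiβ, pow_apply_pow_apply, Nat.add_sub_cancel' hi.le, pow_minimalPeriod_apply]
  have hle : mu σ T β ≤ P - i := mu_le (Nat.sub_pos_of_lt hi) (hP ▸ firstReturn_notMem hτ)
  have hmu : mu σ T β ≠ P - i := fun h => hne (firstReturn_injOn hβ hτ (by rw [← hP, ← h]; rfl))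
  omega

theorem le_pow_mul_apply_pow_apply {c : ℚ} (hc : 0 ≤ c) {κ : B → ℚ}
    (hκ : ∀ s ∉ T, κ s ≤ c ^ mu σ T s * κ (firstReturn σ T s)) (k : ℕ) (hs : s ∉ T)
    (hk : (σ ^ k) s ∉ T) : κ s ≤ c ^ k * κ ((σ ^ k) s) := by
  refine firstReturn_induction (motive := fun k s => κ s ≤ c ^ k * κ ((σ ^ k) s))
    (fun s _ => by simp) (fun s hs k ih => ?_) k hs hk
  calc κ s ≤ c ^ mu σ T s * κ (firstReturn σ T s) := hκ s hs
    _ ≤ c ^ mu σ T s * (c ^ k * κ ((σ ^ k) (firstReturn σ T s))) := by gcongr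
    _ = c ^ (mu σ T s + k) * κ ((σ ^ (mu σ T s + k)) s) := by
      rw [firstReturn, pow_apply_pow_apply, pow_add c, mul_assoc]

-- Going once around the orbit gives `κ s ≤ c ^ k * κ s` with `c ^ k > 1`.
theorem nonneg_of_le_pow_mu_mul_firstReturn {c : ℚ} (hc : 1 < c) {κ : B → ℚ}
    (hκ : ∀ s ∉ T, κ s ≤ c ^ mu σ T s * κ (firstReturn σ T s)) (hs : s ∉ T) : 0 ≤ κ s := by
  have hle := le_pow_mul_apply_pow_apply (zero_le_one.trans hc.le) hκ (orderOf σ) hs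
    (by simpa [pow_orderOf_eq_one] using hs)
  rw [pow_orderOf_eq_one, Equiv.Perm.one_apply] at hle
  have hlt : 1 < c ^ orderOf σ := one_lt_pow₀ hc (orderOf_pos σ).ne'
  nlinarith

end FirstReturn

section BlockSum

variable {B : Type*} {σ : Equiv.Perm B} {T : Set B} {s : B}

/-- The functional `κ ↦ Σ_{0 ≤ i < μ_s} (-p)^i k_{σ^i s}`; for `s ∉ T` this is the `s`-coordinate
of `i_T`. -/
noncomputable def blockSum (σ : Equiv.Perm B) (p : ℕ) (T : Set B) (s : B) : (B → ℚ) →ₗ[ℚ] ℚ :=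
  ∑ i ∈ Finset.range (mu σ T s), (-(p : ℚ)) ^ i • LinearMap.proj ((σ ^ i) s)

theorem blockSum_apply (p : ℕ) (κ : B → ℚ) :
    blockSum σ p T s κ = ∑ i ∈ Finset.range (mu σ T s), (-(p : ℚ)) ^ i * κ ((σ ^ i) s) := by
  simp [blockSum]

theorem blockSum_eq_apply [Finite B] (p : ℕ) {κ : B → ℚ} (hκ : ∀ t ∈ T, κ t = 0) (hs : s ∉ T) :
    blockSum σ p T s κ = κ s := by
  rw [blockSum_apply, Finset.sum_eq_single_of_mem 0 (Finset.mem_range.2 (mu_pos hs))]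
  · simp
  · intro i hi hi0
    rw [hκ _ (pow_apply_mem_of_lt_mu (Nat.pos_of_ne_zero hi0) (Finset.mem_range.1 hi)), mul_zero]

theorem nu_pow_apply_lt [Finite B] (hs : s ∉ T) {k : ℕ} (hk : mu σ T s ≤ k) :
    nu σ T ((σ ^ k) s) < k := by
  have hmem : (σ⁻¹ ^ (k - mu σ T s)) ((σ ^ k) s) ∉ T := by
    rw [inv_pow_apply_pow_apply σ (Nat.sub_le _ _), Nat.sub_sub_self hk]
    exact firstReturn_notMem hs
  exact (Nat.sInf_le hmem).trans_lt (Nat.sub_lt_self (mu_pos hs) hk)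

-- The summands telescope, and the boundary terms vanish since `s, σ^{μ_s} s ∉ T`.
theorem blockSum_bsimple [Finite B] [DecidableEq B] (p : ℕ) {β : B} (hβ : β ∈ T) (hs : s ∉ T) :
    blockSum σ p T s (bsimple σ p β) = 0 := by
  let g : ℕ → ℚ := fun i => (-(p : ℚ)) ^ i * e β ((σ ^ i) s)
  have hterm (i : ℕ) : (-(p : ℚ)) ^ i * bsimple σ p β ((σ ^ i) s) = g i - g (i + 1) := by
    simp only [g, bsimple, e, Pi.add_apply, Pi.smul_apply, smul_eq_mul, pow_succ',
      Equiv.Perm.mul_apply, Equiv.Perm.eq_inv_iff_eq]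
    ring
  have hg (i : ℕ) (hi : (σ ^ i) s ∉ T) : g i = 0 := by
    have hne : (σ ^ i) s ≠ β := ne_of_mem_of_not_mem hβ hi |>.symm
    simp [g, e, hne]
  rw [blockSum_apply, Finset.sum_congr rfl fun i _ => hterm i, Finset.sum_range_sub',
    hg 0 hs, hg _ (firstReturn_notMem hs), sub_zero]

theorem extend_val_apply_of_mem (ℓ : {β : B // β ∉ T} → ℚ) {t : B} (ht : t ∈ T) :
    Function.extend Subtype.val ℓ 0 t = 0 :=
  Function.extend_apply' _ _ _ fun ⟨x, hx⟩ => x.2 (hx ▸ ht)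

variable [Fintype B] [DecidableEq B]

theorem iT_apply (p : ℕ) (κ : B → ℚ) (s : {β : B // β ∉ T}) :
    iT σ p T κ s = blockSum σ p T s κ := by
  obtain ⟨s, hs⟩ := s
  have eq_pow_nu {x : B} (hx : (σ⁻¹ ^ nu σ T x) x = s) : (σ ^ nu σ T x) s = x := by
    rw [inv_pow, Equiv.Perm.inv_eq_iff_eq] at hx
    exact hx.symm
  have not_subset {x : B} (hx : (σ⁻¹ ^ nu σ T x) x = s) : ¬ orbit σ x ⊆ T :=
    eq_pow_nu hx ▸ not_orbit_pow_apply_subset hs _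
  have hite (x : B) : (if orbit σ x ⊆ T then 0 else
      if (σ⁻¹ ^ nu σ T x) x = s then (-(p : ℚ)) ^ nu σ T x else 0) =
      if (σ⁻¹ ^ nu σ T x) x = s then (-(p : ℚ)) ^ nu σ T x else 0 := by
    split_ifs with hsub hx
    · exact absurd hsub (not_subset hx)
    all_goals rfl
  simp only [iT, hite, mul_ite, mul_zero]
  rw [← Finset.sum_filter, blockSum_apply]
  refine Finset.sum_nbij' (nu σ T) (fun i => (σ ^ i) s) ?_ ?_ ?_ ?_ ?_
  · intro x hx
    have hxs := eq_pow_nu (Finset.mem_filter.1 hx).2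
    rw [Finset.mem_range]
    by_contra! hle
    have := nu_pow_apply_lt hs hle
    rw [hxs] at this
    exact this.false
  · intro i hi
    simp [nu_pow_apply hs (Finset.mem_range.1 hi)]
  · exact fun x hx => eq_pow_nu (Finset.mem_filter.1 hx).2
  · exact fun i hi => nu_pow_apply hs (Finset.mem_range.1 hi)
  · intro x hx
    rw [eq_pow_nu (Finset.mem_filter.1 hx).2, mul_comm]

theorem iT_extend (p : ℕ) (ℓ : {β : B // β ∉ T} → ℚ) :
    iT σ p T (Function.extend Subtype.val ℓ 0) = ℓ := by
  ext s
  rw [iT_apply, blockSum_eq_apply p _ s.2, Subtype.val_injective.extend_apply]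
  exact fun t ht => extend_val_apply_of_mem ℓ ht

end BlockSum

section Chain

variable {B : Type*} {σ : Equiv.Perm B} {T : Set B} {s : B} [Finite B]

theorem isChainIn_image_Ioo (hs : s ∉ T) (hmu : 1 < mu σ T s) :
    IsChainIn σ T ((fun i => (σ ^ i) s) '' Set.Ioo 0 (mu σ T s)) := by
  obtain ⟨m, hm⟩ : ∃ m, mu σ T s = m + 2 := ⟨mu σ T s - 2, by omega⟩
  refine ⟨(σ ^ (m + 1)) s, m, ?_, ?_, fun i hi => ?_, ?_⟩
  · rw [← Equiv.Perm.mul_apply, ← pow_succ', ← hm]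
    exact firstReturn_notMem hs
  · simpa [inv_pow_apply_pow_apply σ le_rfl] using hs
  · rw [inv_pow_apply_pow_apply σ (by omega)]
    exact pow_apply_mem_of_lt_mu (by omega) (by omega)
  · ext τ
    constructor
    · rintro ⟨i, ⟨hi0, hi⟩, rfl⟩
      refine ⟨m + 1 - i, by omega, ?_⟩
      rw [inv_pow_apply_pow_apply σ (by omega), Nat.sub_sub_self (by omega)]
    · rintro ⟨i, hi, rfl⟩
      exact ⟨m + 1 - i, ⟨by omega, by omega⟩, (inv_pow_apply_pow_apply σ (by omega) s).symm⟩

theorem mem_tilde_of_even_mu (hs : s ∉ T) (hmu : Even (mu σ T s)) : s ∈ tilde σ T := by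
  have hpos := mu_pos (σ := σ) hs
  have hlt : 1 < mu σ T s := by
    obtain ⟨r, hr⟩ := hmu
    omega
  have hcard : ((fun i => (σ ^ i) s) '' Set.Ioo 0 (mu σ T s)).ncard = mu σ T s - 1 := by
    rw [((injOn_pow_apply hs).mono Set.Ioo_subset_Iio_self).ncard_image,
      ← Finset.coe_Ioo, Set.ncard_coe_finset, Nat.card_Ioo, Nat.sub_zero]
  refine Or.inr (Set.mem_iUnion₂.2 ⟨_, isChainIn_image_Ioo hs hlt, ?_⟩)
  rw [chainExt, if_pos (hcard ▸ Nat.Even.sub_odd hpos hmu odd_one)]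
  exact Or.inr ⟨σ s, ⟨1, ⟨one_pos, hlt⟩, by simp⟩, by simp⟩

end Chain

section Closed

variable {B : Type*} {σ : Equiv.Perm B} {T : Set B} {s β τ : B} {i : ℕ}

-- Both sides take the value `0` when the orbit of `β` is contained in `T`.
theorem nn_eq_mu (hT : tilde σ T = T) (β : B) : nn σ T β = mu σ T β := by
  rw [nn, mu, hT]
  split_ifs with h
  · have : {i : ℕ | 0 < i ∧ (σ ^ i) β ∉ T} = ∅ :=
      Set.eq_empty_of_forall_notMem fun i hi => hi.2 (h ⟨i, rfl⟩)
    rw [this, Nat.sInf_empty]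
  · rfl

theorem Tscr_eq_compl (hT : tilde σ T = T) : Tscr σ T = Tᶜ := by
  simp [Tscr, hT]

theorem epsTf_pow_apply_self [DecidableEq B] (hi : i < mu σ T β) :
    epsTf σ T β ((σ ^ i) β) = -epsT σ T ((σ ^ i) β) :=
  if_pos ⟨i, hi, rfl⟩

theorem epsTf_pow_apply_of_ne [DecidableEq B] (hβ : β ∉ T) (hs : s ∉ T) (hne : s ≠ β)
    (hi : i < mu σ T s) : epsTf σ T β ((σ ^ i) s) = epsT σ T ((σ ^ i) s) :=
  if_neg fun ⟨_, hj, h⟩ => hne (eq_of_pow_apply_eq_pow_apply hs hβ hi hj h)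

variable [Finite B]

theorem odd_mu (hT : tilde σ T = T) (hs : s ∉ T) : Odd (mu σ T s) :=
  Nat.not_even_iff_odd.1 fun h => hs (hT ▸ mem_tilde_of_even_mu hs h)

theorem epsT_pow_apply (hT : tilde σ T = T) (hs : s ∉ T) (hi : i < mu σ T s) :
    epsT σ T ((σ ^ i) s) = (-1) ^ i := by
  rw [epsT, if_neg (not_orbit_pow_apply_subset hs i), hT]
  rcases Nat.eq_zero_or_pos i with rfl | hpos
  · exact if_neg hs
  · rw [if_pos (pow_apply_mem_of_lt_mu hpos hi), mu_pow_apply hs hi, neg_one_pow_congr]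
    have := odd_mu hT hs
    grind

theorem mem_BT_iff (hT : tilde σ T = T) (hs : s ∉ T) :
    s ∈ BT σ T ↔ firstReturn σ T s ≠ s := by
  have hself : s ∈ orbit σ s \ T := ⟨⟨0, rfl⟩, hs⟩
  simp only [BT, hT, Set.mem_ofPred_eq, hs, not_false_eq_true, true_and, Set.nonempty_of_mem hself]
  refine not_congr ⟨fun h => ?_, fun h => ?_⟩
  · exact h.subset ⟨⟨_, rfl⟩, firstReturn_notMem hs⟩
  · exact Set.eq_singleton_iff_unique_mem.2
      ⟨hself, fun t ht => eq_of_sameOrbit_of_firstReturn_eq hs ht.2 ht.1 h⟩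

variable [DecidableEq B]

theorem LTf_self (hT : tilde σ T = T) (p : ℕ) (κ : B → ℚ) (hs : s ∉ T)
    (hne : firstReturn σ T s ≠ s) :
    LTf σ p T s s κ = -blockSum σ p T s κ +
      (p : ℚ) ^ mu σ T s * blockSum σ p T (firstReturn σ T s) κ := by
  have ht := firstReturn_notMem (σ := σ) hs
  have hL : LTf σ p T s s κ =
      Lfun σ p (epsTf σ T s) s (σ⁻¹ (firstReturn σ T (firstReturn σ T s))) κ := by
    simp [LTf, hT, hs, nn_eq_mu hT, firstReturn]
  rw [hL, Lfun_inv_eq_sum p _ κ (sameOrbit_firstReturn_firstReturn s),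
    steps_firstReturn_firstReturn hs hne, Finset.sum_range_add, blockSum_apply, blockSum_apply,
    ← Finset.sum_neg_distrib, Finset.mul_sum]
  congr 1 <;> refine Finset.sum_congr rfl fun i hi => ?_
  · rw [epsTf_pow_apply_self (Finset.mem_range.1 hi),
      epsT_pow_apply hT hs (Finset.mem_range.1 hi), neg_pow (p : ℚ)]
    ring
  · rw [← pow_apply_pow_apply, ← firstReturn,
      epsTf_pow_apply_of_ne hs ht hne (Finset.mem_range.1 hi),
      epsT_pow_apply hT ht (Finset.mem_range.1 hi), neg_pow (p : ℚ)]
    ring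

theorem epsTf_self (hT : tilde σ T = T) (hβ : β ∉ T) : epsTf σ T β β = -1 := by
  have h := epsTf_pow_apply_self (mu_pos (σ := σ) hβ)
  rwa [epsT_pow_apply hT hβ (mu_pos hβ), pow_zero, pow_zero, Equiv.Perm.one_apply] at h

theorem epsTf_of_ne (hT : tilde σ T = T) (hβ : β ∉ T) (hs : s ∉ T) (hne : s ≠ β) :
    epsTf σ T β s = 1 :=
  (epsTf_pow_apply_of_ne hβ hs hne (mu_pos hs)).trans (epsT_pow_apply hT hs (mu_pos hs))

theorem epsTf_mul_pow_mul_nonneg (hT : tilde σ T = T) (p : ℕ) {κ : B → ℚ} (hκT : ∀ t ∈ T, κ t = 0)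
    (hκ0 : ∀ s ∉ T, 0 ≤ κ s) (hβ : β ∉ T) (hne : τ ≠ β) (i : ℕ) :
    0 ≤ epsTf σ T β τ * (p : ℚ) ^ i * κ τ := by
  by_cases hτ : τ ∈ T
  · rw [hκT τ hτ, mul_zero]
  · rw [epsTf_of_ne hT hβ hτ hne, one_mul]
    exact mul_nonneg (by positivity) (hκ0 τ hτ)

theorem LTf_eq_sum_of_ne (hT : tilde σ T = T) (p : ℕ) (κ : B → ℚ) (hτ : τ ∉ T) (hne : τ ≠ β) :
    LTf σ p T β τ κ = ∑ i ∈ Finset.range (Function.minimalPeriod σ (firstReturn σ T τ)),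
      epsTf σ T β ((σ ^ i) (firstReturn σ T τ)) * (p : ℚ) ^ i *
        κ ((σ ^ i) (firstReturn σ T τ)) := by
  have hself : sameOrbit σ (firstReturn σ T τ) (firstReturn σ T τ) := ⟨0, rfl⟩
  rw [LTf, if_neg hne, hT, if_neg hτ, Lfun1, ← firstReturn, Lfun_inv_eq_sum p _ κ hself,
    steps_self]

-- The only negative summand is the one at `β`, and the one at `σ^{μ_β} β` outweighs it.
theorem LTf_nonneg_of_ne (hT : tilde σ T = T) (p : ℕ) {κ : B → ℚ} (hκT : ∀ t ∈ T, κ t = 0)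
    (hκ0 : ∀ s ∉ T, 0 ≤ κ s)
    (hκ : ∀ s ∉ T, κ s ≤ (p : ℚ) ^ mu σ T s * κ (firstReturn σ T s))
    (hβ : β ∉ T) (hτ : τ ∉ T) (hne : τ ≠ β) : 0 ≤ LTf σ p T β τ κ := by
  rw [LTf_eq_sum_of_ne hT p κ hτ hne]
  set s := firstReturn σ T τ
  by_cases hex : ∃ i < Function.minimalPeriod σ s, (σ ^ i) s = β
  · obtain ⟨i, hi, hiβ⟩ := hex
    have hj : i + mu σ T β < Function.minimalPeriod σ s :=
      add_mu_lt_minimalPeriod hβ hτ hne.symm hi hiβ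
    have hlt : i < i + mu σ T β := Nat.lt_add_of_pos_right (mu_pos hβ)
    have hjβ : (σ ^ (i + mu σ T β)) s = firstReturn σ T β := by
      rw [← pow_apply_pow_apply, hiβ, firstReturn]
    have hret : (σ ^ (i + mu σ T β)) s ≠ (σ ^ i) s :=
      pow_apply_ne_of_lt_minimalPeriod hi hj hlt.ne'
    rw [hjβ, hiβ] at hret
    calc (0 : ℚ) ≤ (p : ℚ) ^ i * ((p : ℚ) ^ mu σ T β * κ (firstReturn σ T β) - κ β) :=
          mul_nonneg (by positivity) (sub_nonneg.2 (hκ β hβ))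
      _ = ∑ j ∈ {i, i + mu σ T β}, epsTf σ T β ((σ ^ j) s) * (p : ℚ) ^ j * κ ((σ ^ j) s) := by
          rw [Finset.sum_pair hlt.ne, hiβ, hjβ, epsTf_self hT hβ,
            epsTf_of_ne hT hβ (firstReturn_notMem hβ) hret]
          ring
      _ ≤ _ := by
          refine Finset.sum_le_sum_of_subset_of_nonneg (by grind) fun j hjP hjij => ?_
          refine epsTf_mul_pow_mul_nonneg hT p hκT hκ0 hβ ?_ j
          rw [← hiβ]
          exact pow_apply_ne_of_lt_minimalPeriod hi (Finset.mem_range.1 hjP) (by grind)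
  · push Not at hex
    exact Finset.sum_nonneg fun j hj =>
      epsTf_mul_pow_mul_nonneg hT p hκT hκ0 hβ (hex j (Finset.mem_range.1 hj)) j

theorem blockSum_hvec_nonneg {p : ℕ} (hp : 1 ≤ p) {β' : B} (hβ : β ∉ T) (hβ' : β' ∉ T)
    (hββ' : sameOrbit σ β β') (hs : s ∉ T) (h : firstReturn σ T s = s) :
    0 ≤ blockSum σ p T s (hvec σ p β β') := by
  have hvanish : ∀ t ∈ T, hvec σ p β β' t = 0 := fun t ht => by
    simp [hvec, e, ne_of_mem_of_not_mem ht hβ, ne_of_mem_of_not_mem ht hβ']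
  rw [blockSum_eq_apply p hvanish hs]
  have hpow : (1 : ℚ) ≤ (p : ℚ) ^ steps σ β' β := one_le_pow₀ (by exact_mod_cast hp)
  by_cases hsβ : s = β
  · subst hsβ
    rw [eq_of_sameOrbit_of_firstReturn_eq hs hβ' hββ' h] at hpow ⊢
    simpa [hvec, e] using hpow
  · simp only [hvec, e, Pi.add_apply, Pi.neg_apply, Pi.smul_apply, if_neg hsβ]
    split_ifs <;> simp

theorem blockSum_nonneg_of_mem_D (hT : tilde σ T = T) {p : ℕ} (hp : 1 ≤ p) {κ : B → ℚ}
    (hκ : κ ∈ D σ p T) (hs : s ∉ T) (h : firstReturn σ T s = s) : 0 ≤ blockSum σ p T s κ := by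
  refine nonneg_of_mem_cone ?_ hκ
  rintro v (⟨β, β', hβ, hβ', hββ', rfl⟩ | ⟨β, hβ, rfl | rfl⟩)
  · rw [Tscr_eq_compl hT] at hβ'
    exact blockSum_hvec_nonneg hp hβ hβ' hββ' hs h
  · rw [blockSum_bsimple p hβ hs]
  · rw [map_neg, blockSum_bsimple p hβ hs, neg_zero]

theorem hvec_self (σ : Equiv.Perm B) (p : ℕ) (s : B) :
    hvec σ p s s = ((p : ℚ) ^ Function.minimalPeriod σ s - 1) • e s := by
  rw [hvec, steps_self, sub_smul, one_smul, neg_add_eq_sub]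

theorem e_mem_hull_Dgen (hT : tilde σ T = T) {p : ℕ} (hp : 1 < p) (hs : s ∉ T) :
    e s ∈ PointedCone.hull ℚ (Dgen σ p T) := by
  have hpos : (0 : ℚ) < (p : ℚ) ^ Function.minimalPeriod σ s - 1 :=
    sub_pos.2 (one_lt_pow₀ (by exact_mod_cast hp) (minimalPeriod_pos σ s).ne')
  have hgen : hvec σ p s s ∈ Dgen σ p T :=
    Or.inl ⟨s, s, hs, by rwa [Tscr_eq_compl hT], ⟨0, rfl⟩, rfl⟩
  rw [← inv_smul_smul₀ hpos.ne' (e s), ← hvec_self]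
  exact PointedCone.smul_mem _ (inv_nonneg.2 hpos.le) (PointedCone.subset_hull hgen)

end Closed

section MinimalCone

variable {B : Type*} [DecidableEq B] {σ : Equiv.Perm B} {T : Set B} {p : ℕ} {κ : B → ℚ}

section Finite

variable [Finite B]

theorem mem_D_of_nonneg (hT : tilde σ T = T) (hp : 1 < p) (hκT : ∀ t ∈ T, κ t = 0)
    (hκ0 : ∀ s ∉ T, 0 ≤ κ s) : κ ∈ D σ p T := by
  cases nonempty_fintype B
  have hsum : κ = ∑ s, κ s • e s := by
    ext t
    simp [e]
  rw [D, cone_eq_hull, hsum]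
  refine Submodule.sum_mem _ fun s _ => ?_
  by_cases hs : s ∈ T
  · rw [hκT s hs, zero_smul]
    exact Submodule.zero_mem _
  · exact PointedCone.smul_mem _ (hκ0 s hs) (e_mem_hull_Dgen hT hp hs)

theorem mem_Df (hT : tilde σ T = T) (hκT : ∀ t ∈ T, κ t = 0) (hκ0 : ∀ s ∉ T, 0 ≤ κ s)
    (hκ : ∀ s ∉ T, κ s ≤ (p : ℚ) ^ mu σ T s * κ (firstReturn σ T s)) {β : B}
    (hβ : β ∈ BT σ T) : κ ∈ Df σ p T β := by
  intro τ hτ _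
  have hβT : β ∉ T := hβ.1
  rcases eq_or_ne τ β with rfl | hne
  · rw [LTf_self hT p κ hτ ((mem_BT_iff hT hτ).1 hβ), blockSum_eq_apply p hκT hτ,
      blockSum_eq_apply p hκT (firstReturn_notMem hτ), neg_add_eq_sub]
    exact sub_nonneg.2 (hκ τ hτ)
  · exact LTf_nonneg_of_ne hT p hκT hκ0 hκ hβT hτ hne

theorem blockSum_le_of_mem_Df (hT : tilde σ T = T) (hp : 1 ≤ p) (hD : κ ∈ D σ p T)
    (hDf : ∀ β ∈ BT σ T, κ ∈ Df σ p T β) {s : B} (hs : s ∉ T) :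
    blockSum σ p T s κ ≤ (p : ℚ) ^ mu σ T s * blockSum σ p T (firstReturn σ T s) κ := by
  by_cases h : firstReturn σ T s = s
  · rw [h]
    exact le_mul_of_one_le_left (blockSum_nonneg_of_mem_D hT hp hD hs h)
      (one_le_pow₀ (by exact_mod_cast hp))
  · have hL : 0 ≤ LTf σ p T s s κ := by
      refine hDf s ((mem_BT_iff hT hs).2 h) s hs ?_
      rw [nn_eq_mu hT]
      exact Ne.symm h
    rw [LTf_self hT p κ hs h] at hL
    linarith

end Finite

variable [Fintype B]

theorem mem_Cmin_of_le (hT : tilde σ T = T) (hp : 1 < p) {ℓ : {β : B // β ∉ T} → ℚ}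
    (hℓ : ∀ s : {β : B // β ∉ T},
      ℓ s ≤ (p : ℚ) ^ mu σ T s * ℓ ⟨firstReturn σ T s, firstReturn_notMem s.2⟩) :
    ℓ ∈ Cmin σ p T := by
  let κ : B → ℚ := Function.extend Subtype.val ℓ 0
  have hκT : ∀ t ∈ T, κ t = 0 := fun t ht =>
    extend_val_apply_of_mem ℓ ht
  have hκℓ (x : {β : B // β ∉ T}) : κ x = ℓ x := Subtype.val_injective.extend_apply ..
  have hκ : ∀ s ∉ T, κ s ≤ (p : ℚ) ^ mu σ T s * κ (firstReturn σ T s) := fun s hs => by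
    simpa only [← hκℓ] using hℓ ⟨s, hs⟩
  have hκ0 : ∀ s ∉ T, 0 ≤ κ s := fun s =>
    nonneg_of_le_pow_mu_mul_firstReturn (by exact_mod_cast hp) hκ
  exact ⟨κ, ⟨mem_D_of_nonneg hT hp hκT hκ0, fun β => mem_Df hT hκT hκ0 hκ⟩, iT_extend p ℓ⟩

theorem le_of_mem_Cmin (hT : tilde σ T = T) (hp : 1 ≤ p) {ℓ : {β : B // β ∉ T} → ℚ}
    (hℓ : ℓ ∈ Cmin σ p T) (s : {β : B // β ∉ T}) :
    ℓ s ≤ (p : ℚ) ^ mu σ T s * ℓ ⟨firstReturn σ T s, firstReturn_notMem s.2⟩ := by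
  obtain ⟨κ, ⟨hD, hDf⟩, rfl⟩ := hℓ
  rw [iT_apply, iT_apply]
  exact blockSum_le_of_mem_Df hT hp hD hDf s.2

end MinimalCone

end GO

theorem statement10_general {B : Type*} [Fintype B] [DecidableEq B]
    (σ : Equiv.Perm B) (p : ℕ) (hp : 1 < p) (T : Set B)
    (hT : GO.tilde σ T = T) :
    GO.Cmin σ p T =
      {ℓ : {β : B // β ∉ T} → ℚ |
        ∀ β : {β : B // β ∉ T}, ∀ h : (σ ^ GO.nn σ T β.1) β.1 ∉ T,
          ℓ β ≤ (p : ℚ) ^ GO.nn σ T β.1 * ℓ ⟨(σ ^ GO.nn σ T β.1) β.1, h⟩} := by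
  simp only [GO.nn_eq_mu hT]
  ext ℓ
  exact ⟨fun hℓ β _ => GO.le_of_mem_Cmin hT hp.le hℓ β,
    fun hℓ => GO.mem_Cmin_of_le hT hp fun β => hℓ β (GO.firstReturn_notMem β.2)⟩

/-- if `T̃ = T` then
`𝒞^min_T = {Σ ℓ_β e_β ∈ ℚ^{𝔹−T} : p^{n_β} ℓ_{σ^{n_β}β} ≥ ℓ_β for all β ∈ 𝔹 − T}`. -/
theorem statement10 {B : Type*} [Fintype B] [DecidableEq B] [Nonempty B]
    (σ : Equiv.Perm B) (p : ℕ) (hp : p.Prime) (T : Set B)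
    (hT : GO.tilde σ T = T) :
    GO.Cmin σ p T =
      {ℓ : {β : B // β ∉ T} → ℚ |
        ∀ β : {β : B // β ∉ T}, ∀ h : (σ ^ GO.nn σ T β.1) β.1 ∉ T,
          ℓ β ≤ (p : ℚ) ^ GO.nn σ T β.1 * ℓ ⟨(σ ^ GO.nn σ T β.1) β.1, h⟩} :=
  statement10_general σ p hp.one_lt T hT
end

section
/- Let T ⊆ 𝔹, β ∈ 𝔹(T), and suppose {σ^iβ : 0 < i < n_β} ∩ (T̃ − T) = {σ^{r₁}β, …, σ^{r_t}β} with t ≥ 1 and 0 < r₁ < ⋯ < r_t < n_β. Then h_{σ^{r_t}β} ∈ 𝒟_{T,f_β} and f_{σ^{n_β}β}(T) ∈ 𝒟_{T,f_β}. -/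
/- Setting: `B` is the finite nonempty set 𝔹 equipped with a permutation `σ` (Frobenius),
and `p` is a prime.  Weights live in `ℚ^𝔹 = (B → ℚ)`.  The orbits `𝔹_𝔭` of `σ` are the sets
`orbit σ β`, and for `T ⊆ 𝔹` we have `T_𝔭 = T ∩ orbit σ β`. -/

open scoped Classical

/-! Both vectors are of the form `v = -e_{σⁿw} + pⁿ e_w`, whose two entries have opposite signs.
Hence, for any `c` with `ε(σⁿw) ≤ c ≤ ε(w)`, the value of `L^ε` at `v` is at least `c` times the
value of `L^1`, and the latter telescopes:
`L^1[a, b](v) = ∑_{i < n} pⁱ (p^{N+1} [σⁱ(σ b) = σⁿw] - [σⁱ a = σⁿw])`, where `b = σ^N a`.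

For `h_y` with `y ∈ T̃ − T` (so `n = 1` and `σⁿw = y`) the relevant signs are `ε(y) = -1` and
`ε(σ⁻¹y) = ±1`. The choice `c = -1` works unless `σ b = y`, and `c = 0` works when `ε(σ⁻¹y) = 1`;
the exceptional cases of the two choices do not meet. For `f_w(T)` with `w = σ^{n_β}β ∉ T̃` one
takes `c = 1`, except for the functionals supported on `T̃`, which vanish at `f_w(T)`. -/

namespace GO

open Function

variable {B : Type*} {σ : Equiv.Perm B} {S T : Set B} {a b x y w β τ : B}

/-! ### Orbits and exit times -/

theorem eq_pow_sub_apply {i j : ℕ} (hij : i ≤ j) (h : (σ ^ i) x = (σ ^ j) y) :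
    x = (σ ^ (j - i)) y :=
  (σ ^ i).injective <| by rw [h, ← Equiv.Perm.mul_apply, ← pow_add, Nat.add_sub_cancel' hij]

theorem not_orbit_subset (hx : x ∉ S) : ¬ orbit σ x ⊆ S := fun h => hx (h ⟨0, rfl⟩)

theorem sameOrbit.inv_apply (ha : a ∈ periodicPts σ) (h : sameOrbit σ a x) :
    sameOrbit σ a (σ⁻¹ x) := by
  obtain ⟨m, rfl⟩ := h
  obtain ⟨_ | n, hn, hper⟩ := ha
  · exact absurd hn (lt_irrefl 0)
  · rw [IsPeriodicPt, IsFixedPt, Equiv.Perm.iterate_eq_pow] at hper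
    refine ⟨m + n, ?_⟩
    rw [Equiv.Perm.eq_inv_iff_eq, ← Equiv.Perm.mul_apply, ← pow_succ', add_assoc, pow_add,
      Equiv.Perm.mul_apply, hper]

theorem sameOrbit_inv_apply_self (ha : a ∈ periodicPts σ) : sameOrbit σ a (σ⁻¹ a) :=
  sameOrbit.inv_apply ha ⟨0, rfl⟩

theorem pow_steps0_apply (h : sameOrbit σ a b) : (σ ^ steps0 σ a b) a = b :=
  Nat.sInf_mem (s := {n | (σ ^ n) a = b}) h

/-- The first positive time at which the forward `σ`-orbit of `a` leaves `S`; it is `0` if this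
never happens. Both `μ` and `n` are exit times, from `T` and from `T̃`. -/
noncomputable def exitTime (σ : Equiv.Perm B) (S : Set B) (a : B) : ℕ :=
  sInf {i : ℕ | 0 < i ∧ (σ ^ i) a ∉ S}

theorem mu_eq_exitTime (σ : Equiv.Perm B) (T : Set B) (a : B) : mu σ T a = exitTime σ T a := by
  rw [mu, exitTime]
  split_ifs with h
  · have hempty : {i : ℕ | 0 < i ∧ (σ ^ i) a ∉ T} = ∅ :=
      Set.eq_empty_of_forall_notMem fun i hi => hi.2 (h ⟨i, rfl⟩)
    rw [hempty, Nat.sInf_empty]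
  · rfl

theorem pow_mem_of_lt_exitTime {i : ℕ} (hi : 0 < i) (h : i < exitTime σ S a) :
    (σ ^ i) a ∈ S := by
  by_contra hmem
  exact Nat.notMem_of_lt_sInf h ⟨hi, hmem⟩

theorem exitTime_le {i : ℕ} (hi : 0 < i) (h : (σ ^ i) a ∉ S) : exitTime σ S a ≤ i :=
  Nat.sInf_le ⟨hi, h⟩

theorem exitTime_spec {i : ℕ} (hi : 0 < i) (h : (σ ^ i) a ∉ S) :
    0 < exitTime σ S a ∧ (σ ^ exitTime σ S a) a ∉ S :=
  Nat.sInf_mem (s := {i | 0 < i ∧ (σ ^ i) a ∉ S}) ⟨i, hi, h⟩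

theorem exitTime_spec_of_mem_periodicPts (ha : a ∈ periodicPts σ) (h : ¬ orbit σ a ⊆ S) :
    0 < exitTime σ S a ∧ (σ ^ exitTime σ S a) a ∉ S := by
  obtain ⟨_, ⟨i, rfl⟩, hi⟩ := Set.not_subset.1 h
  obtain ⟨n, hn, hper⟩ := ha
  rw [IsPeriodicPt, IsFixedPt, Equiv.Perm.iterate_eq_pow] at hper
  refine exitTime_spec (i := i + n) (by omega) ?_
  rwa [pow_add, Equiv.Perm.mul_apply, hper]

theorem exitTime_eq_of_forall_mem {n : ℕ} (hn : 0 < n) (hout : (σ ^ n) a ∉ S)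
    (hin : ∀ i, 0 < i → i < n → (σ ^ i) a ∈ S) : exitTime σ S a = n := by
  obtain ⟨hpos, hexit⟩ := exitTime_spec hn hout
  refine (exitTime_le hn hout).antisymm (not_lt.1 fun hlt => hexit (hin _ hpos hlt))

theorem pow_injOn_Ioo_exitTime (ha : a ∉ S) :
    Set.InjOn (fun i => (σ ^ i) a) (Set.Ioo 0 (exitTime σ S a)) := by
  have no_return : ∀ i j, i < j → j < exitTime σ S a → (σ ^ i) a ≠ (σ ^ j) a := by
    intro i j hij hj h
    apply ha
    rw [eq_pow_sub_apply hij.le h]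
    exact pow_mem_of_lt_exitTime (by omega) (by omega)
  intro i hi j hj h
  rcases lt_trichotomy i j with hlt | heq | hlt
  · exact absurd h (no_return i j hlt hj.2)
  · exact heq
  · exact absurd h.symm (no_return j i hlt hi.2)

theorem exitTime_le_of_pow_eq {k : ℕ} (hk : 0 < k) (hy : y ∉ S)
    (h : (σ ^ exitTime σ S x) x = (σ ^ k) y) : exitTime σ S x ≤ k := by
  by_contra! hlt
  apply hy
  rw [eq_pow_sub_apply hlt.le h.symm]
  exact pow_mem_of_lt_exitTime (by omega) (by omega)

theorem eq_of_pow_exitTime_eq (hx : x ∉ S) (hy : y ∉ S) (hx0 : 0 < exitTime σ S x)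
    (hy0 : 0 < exitTime σ S y) (h : (σ ^ exitTime σ S x) x = (σ ^ exitTime σ S y) y) :
    x = y := by
  have heq : exitTime σ S x = exitTime σ S y :=
    (exitTime_le_of_pow_eq hy0 hy h).antisymm (exitTime_le_of_pow_eq hx0 hx h.symm)
  rw [heq] at h
  exact (σ ^ exitTime σ S y).injective h

/-! ### The set `T̃` and the signs -/

theorem IsChainIn.exists_eq_image_pow {C : Set B} (hC : IsChainIn σ T C) :
    ∃ x ∉ T, C = (fun i => (σ ^ i) x) '' Set.Ioo 0 (exitTime σ T x) := by
  obtain ⟨γ, m, hout, hpre, hin, rfl⟩ := hC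
  set x := (σ⁻¹ ^ (m + 1)) γ
  have hpow : ∀ i ≤ m + 1, (σ ^ i) x = (σ⁻¹ ^ (m + 1 - i)) γ := fun i hi => by
    rw [inv_pow, Equiv.Perm.eq_inv_iff_eq, ← Equiv.Perm.mul_apply, ← pow_add,
      Nat.sub_add_cancel hi, ← Equiv.Perm.eq_inv_iff_eq, ← inv_pow]
  have hexit : exitTime σ T x = m + 2 := by
    refine exitTime_eq_of_forall_mem (by omega) ?_ fun i hi hlt => ?_
    · rw [pow_succ', Equiv.Perm.mul_apply, hpow (m + 1) le_rfl]
      simpa using hout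
    · rw [hpow i (by omega)]
      exact hin _ (by omega)
  refine ⟨x, hpre, Set.ext fun τ => ⟨?_, ?_⟩⟩
  · rintro ⟨i, hi, rfl⟩
    refine ⟨m + 1 - i, ⟨by omega, by omega⟩, ?_⟩
    dsimp only
    rw [hpow _ (by omega), Nat.sub_sub_self (by omega)]
  · rintro ⟨i, hi, rfl⟩
    rw [hexit, Set.mem_Ioo] at hi
    exact ⟨m + 1 - i, by omega, hpow i (by omega)⟩

theorem odd_exitTime_sub_one (hx : x ∈ tilde σ T) (hxT : x ∉ T) : Odd (exitTime σ T x - 1) := by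
  simp only [tilde, Set.mem_union, hxT, false_or, Set.mem_iUnion] at hx
  obtain ⟨C, hC, hxC⟩ := hx
  obtain ⟨z, hz, rfl⟩ := hC.exists_eq_image_pow
  have hchain : ∀ i, 0 < i → i < exitTime σ T z → (σ ^ i) z ≠ x := by
    rintro i hi hlt rfl
    exact hxT (pow_mem_of_lt_exitTime hi hlt)
  rw [chainExt] at hxC
  split_ifs at hxC with hodd
  · rw [(pow_injOn_Ioo_exitTime hz).ncard_image, Set.ncard_Ioo_nat, Nat.sub_zero] at hodd
    rcases hxC with ⟨i, hi, hix⟩ | ⟨_, ⟨i, ⟨hi0, hi⟩, rfl⟩, hix⟩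
    · exact absurd hix (hchain i hi.1 hi.2)
    · obtain ⟨j, rfl⟩ := Nat.exists_eq_add_one.2 hi0
      have hjx : (σ ^ j) z = x := by
        rw [← hix, Equiv.Perm.eq_inv_iff_eq, ← Equiv.Perm.mul_apply, ← pow_succ']
      rcases Nat.eq_zero_or_pos j with rfl | hj
      · rwa [← show z = x from hjx]
      · exact absurd hjx (hchain j hj (by omega))
  · obtain ⟨i, hi, hix⟩ := hxC
    exact absurd hix (hchain i hi.1 hi.2)

theorem epsT_eq_neg_one (hx : x ∈ tilde σ T) (hxT : x ∉ T) : epsT σ T x = -1 := by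
  rw [epsT, if_neg (not_orbit_subset hxT), if_pos hx, mu_eq_exitTime,
    (odd_exitTime_sub_one hx hxT).neg_one_pow]

theorem epsT_eq_one_of_notMem_tilde (hx : x ∉ tilde σ T) : epsT σ T x = 1 := by
  rw [epsT, if_neg (not_orbit_subset fun h => hx (Or.inl h)), if_neg hx]

theorem epsT_inv_apply (hx : x ∉ T) : epsT σ T (σ⁻¹ x) = 1 := by
  have hexit : exitTime σ T (σ⁻¹ x) = 1 :=
    exitTime_eq_of_forall_mem one_pos (by simpa using hx) fun i hi hlt => by omega
  have horbit : ¬ orbit σ (σ⁻¹ x) ⊆ T := fun h => hx (h ⟨1, by simp⟩)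
  rw [epsT, if_neg horbit, mu_eq_exitTime, hexit]
  simp

theorem abs_epsT_le_one (σ : Equiv.Perm B) (T : Set B) (x : B) : |epsT σ T x| ≤ 1 := by
  rw [epsT]
  split_ifs <;> simp

section DecidableEq

variable [DecidableEq B]

theorem abs_epsTf_le_one (σ : Equiv.Perm B) (T : Set B) (β x : B) : |epsTf σ T β x| ≤ 1 := by
  rw [epsTf]
  split_ifs
  · rw [abs_neg]
    exact abs_epsT_le_one σ T x
  · exact abs_epsT_le_one σ T x

theorem epsTf_eq_epsT (hx : x ∉ T) (hne : x ≠ β) : epsTf σ T β x = epsT σ T x := by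
  rw [epsTf, if_neg]
  rintro ⟨i, hi, rfl⟩
  rw [mu_eq_exitTime] at hi
  rcases Nat.eq_zero_or_pos i with rfl | hpos
  · exact hne rfl
  · exact hx (pow_mem_of_lt_exitTime hpos hi)

theorem epsTf_inv_apply (hx : x ∉ T) (hne : x ≠ (σ ^ exitTime σ T β) β) :
    epsTf σ T β (σ⁻¹ x) = 1 := by
  rw [epsTf, if_neg, epsT_inv_apply hx]
  rintro ⟨i, hi, hix⟩
  rw [mu_eq_exitTime] at hi
  have hix' : x = (σ ^ (i + 1)) β := by
    rw [pow_succ', Equiv.Perm.mul_apply, ← hix]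
    exact (σ.apply_symm_apply x).symm
  rcases (Nat.succ_le_of_lt hi).eq_or_lt with heq | hlt
  · exact hne (heq ▸ hix')
  · exact hx (hix' ▸ pow_mem_of_lt_exitTime i.succ_pos hlt)

end DecidableEq

/-! ### The functionals `L^ε[a, b]` -/

section Lfun

variable {p n : ℕ} {ε : B → ℚ}

theorem LT_eq_zero {κ : B → ℚ} (hτ : τ ∈ tilde σ T) (hκ : ∀ x ∈ tilde σ T, κ x = 0) :
    GO.LT σ p T τ κ = 0 := by
  rw [GO.LT, if_pos hτ, Lfun]
  refine Finset.sum_eq_zero fun i hi => ?_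
  have hsteps : steps0 σ τ ((σ ^ (mu σ T τ - 1)) τ) ≤ mu σ T τ - 1 := Nat.sInf_le rfl
  have hi' : i ≤ mu σ T τ - 1 := (Nat.lt_succ_iff.1 (Finset.mem_range.1 hi)).trans hsteps
  rw [mu_eq_exitTime] at hi'
  have hmem : (σ ^ i) τ ∈ tilde σ T := by
    rcases Nat.eq_zero_or_pos i with rfl | hpos
    · exact hτ
    · exact Or.inl (pow_mem_of_lt_exitTime hpos (by omega))
  rw [hκ _ hmem, mul_zero]

variable [DecidableEq B]

/-- The vector `-e_{σⁿw} + pⁿ e_w`. It is the paper's `h_{σⁿw}^w` without the restriction that `n`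
be at most the length of the orbit of `w`. -/
def hshift (σ : Equiv.Perm B) (p n : ℕ) (w : B) : B → ℚ :=
  -(e ((σ ^ n) w)) + ((p : ℚ) ^ n) • e w

theorem hsimple_eq_hshift (σ : Equiv.Perm B) (p : ℕ) (y : B) :
    hsimple σ p y = hshift σ p 1 (σ⁻¹ y) := by
  simp [hsimple, hshift]

theorem mul_Lfun_one_le_Lfun_hshift {c : ℚ} (hz : ε ((σ ^ n) w) ≤ c) (hw : c ≤ ε w) :
    c * Lfun σ p 1 a b (hshift σ p n w) ≤ Lfun σ p ε a b (hshift σ p n w) := by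
  have pointwise : ∀ x, c * hshift σ p n w x ≤ ε x * hshift σ p n w x := by
    intro x
    have hneg : 0 ≤ (c - ε x) * e ((σ ^ n) w) x := by
      rw [e]
      split_ifs with h
      · simpa [h] using hz
      · simp
    have hpos : 0 ≤ (ε x - c) * ((p : ℚ) ^ n * e w x) := by
      rw [e]
      split_ifs with h
      · rw [h]
        exact mul_nonneg (sub_nonneg.2 hw) (by positivity)
      · simp
    simp only [hshift, Pi.add_apply, Pi.neg_apply, Pi.smul_apply, smul_eq_mul]
    linarith
  rw [Lfun, Lfun, Finset.mul_sum]
  refine Finset.sum_le_sum fun i _ => ?_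
  calc c * ((1 : B → ℚ) ((σ ^ i) a) * (p : ℚ) ^ i * hshift σ p n w ((σ ^ i) a))
      = (p : ℚ) ^ i * (c * hshift σ p n w ((σ ^ i) a)) := by rw [Pi.one_apply]; ring
    _ ≤ (p : ℚ) ^ i * (ε ((σ ^ i) a) * hshift σ p n w ((σ ^ i) a)) := by
      exact mul_le_mul_of_nonneg_left (pointwise _) (by positivity)
    _ = ε ((σ ^ i) a) * (p : ℚ) ^ i * hshift σ p n w ((σ ^ i) a) := by ring

theorem Lfun_one_hshift (hb : sameOrbit σ a b) :
    Lfun σ p 1 a b (hshift σ p n w) = ∑ i ∈ Finset.range n, (p : ℚ) ^ i *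
      ((p : ℚ) ^ (steps0 σ a b + 1) * e ((σ ^ n) w) ((σ ^ i) (σ b))
        - e ((σ ^ n) w) ((σ ^ i) a)) := by
  set N := steps0 σ a b + 1
  let F : ℕ → ℚ := fun i => (p : ℚ) ^ i * e ((σ ^ n) w) ((σ ^ i) a)
  have shift_w : ∀ i, 1 * (p : ℚ) ^ i * hshift σ p n w ((σ ^ i) a) = F (n + i) - F i := by
    intro i
    have he : e w ((σ ^ i) a) = e ((σ ^ n) w) ((σ ^ (n + i)) a) := by
      simp only [e, pow_add, Equiv.Perm.mul_apply, (σ ^ n).injective.eq_iff]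
    simp only [F, hshift, Pi.add_apply, Pi.neg_apply, Pi.smul_apply, smul_eq_mul, he]
    ring
  have shift_b : ∀ i, (p : ℚ) ^ i * ((p : ℚ) ^ N * e ((σ ^ n) w) ((σ ^ i) (σ b))
      - e ((σ ^ n) w) ((σ ^ i) a)) = F (N + i) - F i := by
    intro i
    have hσb : σ b = (σ ^ N) a := by
      rw [pow_succ', Equiv.Perm.mul_apply, pow_steps0_apply hb]
    simp only [F, hσb, ← Equiv.Perm.mul_apply, ← pow_add, add_comm N i]
    ring
  simp only [Lfun, Pi.one_apply, shift_w, shift_b, Finset.sum_sub_distrib]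
  have hNn := Finset.sum_range_add F N n
  have hnN := Finset.sum_range_add F n N
  rw [add_comm n N] at hnN
  linarith

theorem Lfun_hsimple_nonneg (hb : sameOrbit σ a b) (hy : ε y ≤ -1) (hy' : -1 ≤ ε (σ⁻¹ y))
    (hne : σ b ≠ y) : 0 ≤ Lfun σ p ε a b (hsimple σ p y) := by
  rw [hsimple_eq_hshift]
  refine le_trans ?_ (mul_Lfun_one_le_Lfun_hshift (c := -1) (by simpa using hy) hy')
  rw [Lfun_one_hshift hb]
  simp only [Finset.sum_range_one, pow_zero, pow_one, one_mul, Equiv.Perm.one_apply,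
    Equiv.Perm.coe_inv, Equiv.apply_symm_apply, e, if_neg hne]
  split_ifs <;> norm_num

theorem Lfun_hsimple_nonneg_of_sign (hy : ε y ≤ 0) (hy' : 0 ≤ ε (σ⁻¹ y)) :
    0 ≤ Lfun σ p ε a b (hsimple σ p y) := by
  rw [hsimple_eq_hshift]
  simpa using mul_Lfun_one_le_Lfun_hshift (p := p) (n := 1) (a := a) (b := b)
    (by simpa using hy) hy'

theorem Lfun_one_le_Lfun_hshift (hz : ε ((σ ^ n) w) ≤ 1) (hw : ε w = 1) :
    Lfun σ p 1 a b (hshift σ p n w) ≤ Lfun σ p ε a b (hshift σ p n w) := by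
  simpa using mul_Lfun_one_le_Lfun_hshift (p := p) (a := a) (b := b) hz hw.ge

theorem Lfun1_one_hshift_nonneg (hp : 1 ≤ p) (ha : a ∈ periodicPts σ) :
    0 ≤ Lfun1 σ p 1 a (hshift σ p n w) := by
  rw [Lfun1, Lfun_one_hshift (sameOrbit_inv_apply_self ha)]
  refine Finset.sum_nonneg fun i _ => mul_nonneg (by positivity) ?_
  have hpow : (1 : ℚ) ≤ (p : ℚ) ^ (steps0 σ a (σ⁻¹ a) + 1) :=
    one_le_pow₀ (by exact_mod_cast hp)
  rw [show σ (σ⁻¹ a) = a from σ.apply_symm_apply a, e]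
  split_ifs <;> linarith

theorem Lfun_one_hshift_nonneg {m : ℕ} (hp : 1 ≤ p) (hb : sameOrbit σ a b)
    (hσb : σ b = (σ ^ m) w) (hm : 0 < m) (hmn : m ≤ n)
    (ha : ∀ i, 0 < i → i < n → (σ ^ i) a ≠ (σ ^ n) w) :
    0 ≤ Lfun σ p 1 a b (hshift σ p n w) := by
  have hp' : (1 : ℚ) ≤ p := by exact_mod_cast hp
  have e_nonneg : ∀ z x : B, 0 ≤ e z x := fun z x => by rw [e]; split_ifs <;> norm_num
  have sum_a_le : ∑ i ∈ Finset.range n, (p : ℚ) ^ i * e ((σ ^ n) w) ((σ ^ i) a) ≤ 1 := by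
    rw [Finset.sum_eq_single 0]
    · rw [e]
      split_ifs <;> simp
    · intro i hi hi0
      rw [e, if_neg (ha i (Nat.pos_of_ne_zero hi0) (Finset.mem_range.1 hi)), mul_zero]
    · exact fun h => absurd (Finset.mem_range.2 (by omega)) h
  have le_sum_b :
      1 ≤ ∑ i ∈ Finset.range n, (p : ℚ) ^ i * e ((σ ^ n) w) ((σ ^ i) (σ b)) := by
    have hret : (σ ^ (n - m)) (σ b) = (σ ^ n) w := by
      rw [hσb, ← Equiv.Perm.mul_apply, ← pow_add, Nat.sub_add_cancel hmn]
    calc (1 : ℚ) ≤ (p : ℚ) ^ (n - m) := one_le_pow₀ hp'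
      _ = (p : ℚ) ^ (n - m) * e ((σ ^ n) w) ((σ ^ (n - m)) (σ b)) := by simp [hret, e]
      _ ≤ _ := Finset.single_le_sum (f := fun i => (p : ℚ) ^ i * e ((σ ^ n) w) ((σ ^ i) (σ b)))
        (fun i _ => mul_nonneg (by positivity) (e_nonneg _ _)) (Finset.mem_range.2 (by omega))
  have hpow : (1 : ℚ) ≤ (p : ℚ) ^ (steps0 σ a b + 1) := one_le_pow₀ hp'
  rw [Lfun_one_hshift hb]
  simp only [mul_sub, Finset.sum_sub_distrib, mul_left_comm _ ((p : ℚ) ^ (steps0 σ a b + 1)),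
    ← Finset.mul_sum]
  linarith [one_le_mul_of_one_le_of_one_le hpow le_sum_b]

end Lfun

/-! ### Membership in `𝒟_{T,f_β}` -/

theorem sigbar_notMem_tilde (hper : β ∈ periodicPts σ) (h : ¬ orbit σ β ⊆ tilde σ T) :
    sigbar σ T β ∉ tilde σ T :=
  (exitTime_spec_of_mem_periodicPts hper h).2

theorem not_orbit_subset_tilde (hβ : β ∈ BT σ T) : ¬ orbit σ β ⊆ tilde σ T :=
  Set.sdiff_nonempty.1 hβ.2.1

theorem nn_lt_minimalPeriod (hper : β ∈ periodicPts σ) (hβ : β ∈ BT σ T) :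
    nn σ T β < minimalPeriod σ β := by
  obtain ⟨_, ⟨⟨j, rfl⟩, hj⟩, hjβ⟩ : ∃ x ∈ orbit σ β \ tilde σ T, x ≠ β := by
    by_contra! h
    exact hβ.2.2 ((Set.Nonempty.subset_singleton_iff hβ.2.1).1 h)
  have hmod : (σ ^ (j % minimalPeriod σ β)) β = (σ ^ j) β := by
    simp only [← Equiv.Perm.iterate_eq_pow, iterate_mod_minimalPeriod_eq]
  have hpos : 0 < j % minimalPeriod σ β := by
    refine Nat.pos_of_ne_zero fun h0 => hjβ ?_
    rw [← hmod, h0, pow_zero, Equiv.Perm.one_apply]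
  exact (exitTime_le hpos (hmod ▸ hj)).trans_lt
    (Nat.mod_lt _ (minimalPeriod_pos_of_mem_periodicPts hper))

theorem pow_ne_self_of_le_nn {i : ℕ} (hper : β ∈ periodicPts σ) (hβ : β ∈ BT σ T) (hi : 0 < i)
    (hle : i ≤ nn σ T β) : (σ ^ i) β ≠ β := by
  rw [← Equiv.Perm.iterate_eq_pow]
  exact not_isPeriodicPt_of_pos_of_lt_minimalPeriod hi.ne'
    (hle.trans_lt (nn_lt_minimalPeriod hper hβ))

theorem sigbar_ne_self (hper : β ∈ periodicPts σ) (hβ : β ∈ BT σ T) : sigbar σ T β ≠ β :=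
  pow_ne_self_of_le_nn hper hβ
    (exitTime_spec_of_mem_periodicPts hper (not_orbit_subset_tilde hβ)).1 le_rfl

theorem pow_mu_sigbar_ne_pow {k : ℕ} (hσ : ∀ b, b ∈ periodicPts σ) (hβ : β ∈ BT σ T)
    (hk : 0 < k) (hkn : k < nn σ T β) :
    (σ ^ mu σ T (sigbar σ T β)) (sigbar σ T β) ≠ (σ ^ k) β := by
  rw [mu_eq_exitTime]
  intro h
  have hw : sigbar σ T β ∉ tilde σ T := sigbar_notMem_tilde (hσ β) (not_orbit_subset_tilde hβ)
  have hpos : 0 < exitTime σ T (sigbar σ T β) :=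
    (exitTime_spec_of_mem_periodicPts (hσ _) (not_orbit_subset fun hT => hw (Or.inl hT))).1
  have hle := exitTime_le_of_pow_eq hk hβ.1 h
  have hwpow := eq_pow_sub_apply hle h
  rcases Nat.eq_zero_or_pos (k - exitTime σ T (sigbar σ T β)) with h0 | h0
  · rw [h0] at hwpow
    exact sigbar_ne_self (hσ β) hβ hwpow
  · rw [hwpow] at hw
    exact hw (pow_mem_of_lt_exitTime h0 (show _ < nn σ T β by omega))

theorem sameOrbit_inv_pow_sigbar (hper : β ∈ periodicPts σ) (m : ℕ) :
    sameOrbit σ β (σ⁻¹ ((σ ^ m) (sigbar σ T β))) :=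
  sameOrbit.inv_apply hper ⟨m + nn σ T β, by rw [pow_add, Equiv.Perm.mul_apply, sigbar]⟩

variable [DecidableEq B] {p : ℕ} {κ : B → ℚ}

theorem mem_Df_of_nonneg (hper : β ∈ periodicPts σ) (hβ : β ∈ BT σ T)
    (hne : ∀ τ ∉ T, τ ≠ β → 0 ≤ Lfun1 σ p (epsTf σ T β) ((σ ^ mu σ T τ) τ) κ)
    (hself : β ∉ tilde σ T → 0 ≤ Lfun σ p (epsTf σ T β) β
      (σ⁻¹ ((σ ^ mu σ T (sigbar σ T β)) (sigbar σ T β))) κ)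
    (htilde : ∀ τ ∈ tilde σ T, 0 ≤ GO.LT σ p T τ κ) : κ ∈ Df σ p T β := by
  intro τ hτ _
  rw [LTf]
  split_ifs with hτβ hβt hτt
  · exact hne (sigbar σ T β)
      (fun hT => sigbar_notMem_tilde hper (not_orbit_subset_tilde hβ) (Or.inl hT))
      (sigbar_ne_self hper hβ)
  · exact hself hβt
  · exact htilde τ hτt
  · exact hne τ hτ hτβ

theorem hsimple_mem_Df {k : ℕ} (hσ : ∀ b, b ∈ periodicPts σ) (hβ : β ∈ BT σ T) (hk : 0 < k)
    (hkn : k < nn σ T β) (hy : (σ ^ k) β ∈ tilde σ T \ T) :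
    hsimple σ p ((σ ^ k) β) ∈ Df σ p T β := by
  have hβtilde := pow_mu_sigbar_ne_pow hσ hβ hk hkn
  have hyβ : (σ ^ k) β ≠ β := pow_ne_self_of_le_nn (hσ β) hβ hk hkn.le
  generalize (σ ^ k) β = y at *
  have hεy : epsTf σ T β y = -1 := by rw [epsTf_eq_epsT hy.2 hyβ, epsT_eq_neg_one hy.1 hy.2]
  have hεy' : -1 ≤ epsTf σ T β (σ⁻¹ y) := (abs_le.1 (abs_epsTf_le_one ..)).1
  refine mem_Df_of_nonneg (hσ β) hβ (fun τ hτ hτβ => ?_) (fun _ => ?_) (fun τ hτ => ?_)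
  · by_cases hstart : (σ ^ mu σ T τ) τ = y
    · have hyβ' : y ≠ (σ ^ exitTime σ T β) β := by
        rw [← hstart, mu_eq_exitTime]
        exact fun h => hτβ <| eq_of_pow_exitTime_eq hτ hβ.1
          (exitTime_spec_of_mem_periodicPts (hσ _) (not_orbit_subset hτ)).1
          (exitTime_spec_of_mem_periodicPts (hσ _) (not_orbit_subset hβ.1)).1 h
      exact Lfun_hsimple_nonneg_of_sign (by rw [hεy]; norm_num)
        (by rw [epsTf_inv_apply hy.2 hyβ']; norm_num)
    · exact Lfun_hsimple_nonneg (sameOrbit_inv_apply_self (hσ _)) hεy.le hεy'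
        (by simpa using hstart)
  · exact Lfun_hsimple_nonneg (sameOrbit_inv_pow_sigbar (hσ β) _) hεy.le hεy'
      (by simpa using hβtilde)
  · rw [GO.LT, if_pos hτ]
    exact Lfun_hsimple_nonneg_of_sign (by rw [epsT_eq_neg_one hy.1 hy.2]; norm_num)
      (by rw [epsT_inv_apply hy.2]; norm_num)

theorem fvec_eq_hshift (hw : w ∉ tilde σ T) : fvec σ p T w = hshift σ p (nn σ T w) w := by
  rw [fvec, if_neg (not_orbit_subset hw), if_neg hw, fH, hshift]

theorem fvec_sigbar_mem_Df (hσ : ∀ b, b ∈ periodicPts σ) (hp : 1 ≤ p) (hβ : β ∈ BT σ T) :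
    fvec σ p T (sigbar σ T β) ∈ Df σ p T β := by
  set w := sigbar σ T β
  have hw : w ∉ tilde σ T := sigbar_notMem_tilde (hσ β) (not_orbit_subset_tilde hβ)
  have hz : (σ ^ nn σ T w) w ∉ tilde σ T := sigbar_notMem_tilde (hσ w) (not_orbit_subset hw)
  have hwT : w ∉ T := fun h => hw (Or.inl h)
  have hzT : (σ ^ nn σ T w) w ∉ T := fun h => hz (Or.inl h)
  have hnn : 0 < nn σ T w := (exitTime_spec_of_mem_periodicPts (hσ w) (not_orbit_subset hw)).1
  have hεw : epsTf σ T β w = 1 := by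
    rw [epsTf_eq_epsT hwT (sigbar_ne_self (hσ β) hβ), epsT_eq_one_of_notMem_tilde hw]
  have hεz : epsTf σ T β ((σ ^ nn σ T w) w) ≤ 1 := (abs_le.1 (abs_epsTf_le_one ..)).2
  rw [fvec_eq_hshift hw]
  refine mem_Df_of_nonneg (hσ β) hβ (fun τ _ _ => ?_) (fun hβt => ?_) (fun τ hτ => ?_)
  · exact (Lfun1_one_hshift_nonneg hp (hσ _)).trans (Lfun_one_le_Lfun_hshift hεz hεw)
  · refine le_trans ?_ (Lfun_one_le_Lfun_hshift hεz hεw)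
    refine Lfun_one_hshift_nonneg hp (sameOrbit_inv_pow_sigbar (hσ β) _)
      (σ.apply_symm_apply _) ?_ ?_ fun i hi hin h => hβt ?_
    · rw [mu_eq_exitTime]
      exact (exitTime_spec hnn hzT).1
    · rw [mu_eq_exitTime]
      exact exitTime_le hnn hzT
    · rw [eq_pow_sub_apply hin.le h]
      exact pow_mem_of_lt_exitTime (by omega) (show _ < nn σ T w by omega)
  · refine (LT_eq_zero hτ fun x hx => ?_).ge
    simp [hshift, e, ne_of_mem_of_not_mem hx hw, ne_of_mem_of_not_mem hx hz]

end GO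

theorem statement13_general {B : Type*} [DecidableEq B] {σ : Equiv.Perm B}
    (hσ : ∀ b, b ∈ Function.periodicPts σ) {p : ℕ} (hp : 1 ≤ p) {T : Set B} {β : B}
    (hβ : β ∈ GO.BT σ T) :
    (∀ k, 0 < k → k < GO.nn σ T β → (σ ^ k) β ∈ GO.tilde σ T \ T →
      GO.hsimple σ p ((σ ^ k) β) ∈ GO.Df σ p T β) ∧
    GO.fvec σ p T ((σ ^ GO.nn σ T β) β) ∈ GO.Df σ p T β :=
  ⟨fun _ hk hkn hy => GO.hsimple_mem_Df hσ hβ hk hkn hy, GO.fvec_sigbar_mem_Df hσ hp hβ⟩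

/-- let `β ∈ 𝔹(T)` and suppose
`{σ^iβ : 0 < i < n_β} ∩ (T̃ − T) = {σ^{r₁}β, …, σ^{r_t}β}` with `t ≥ 1` (here `t = s+1`)
and `0 < r₁ < ⋯ < r_t < n_β`.  Then `h_{σ^{r_t}β} ∈ 𝒟_{T,f_β}` and
`f_{σ^{n_β}β}(T) ∈ 𝒟_{T,f_β}`. -/
theorem statement13 {B : Type*} [Fintype B] [DecidableEq B] [Nonempty B]
    (σ : Equiv.Perm B) (p : ℕ) (hp : p.Prime) (T : Set B) (β : B)
    (hβ : β ∈ GO.BT σ T)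
    (s : ℕ) (r : Fin (s + 1) → ℕ) (hmono : StrictMono r)
    (hpos : ∀ i, 0 < r i) (hlt : ∀ i, r i < GO.nn σ T β)
    (hset : {τ : B | ∃ i, 0 < i ∧ i < GO.nn σ T β ∧ τ = (σ ^ i) β} ∩ (GO.tilde σ T \ T)
      = {τ : B | ∃ i : Fin (s + 1), τ = (σ ^ r i) β}) :
    GO.hsimple σ p ((σ ^ r (Fin.last s)) β) ∈ GO.Df σ p T β ∧
    GO.fvec σ p T ((σ ^ GO.nn σ T β) β) ∈ GO.Df σ p T β := by
  have hlast : (σ ^ r (Fin.last s)) β ∈ GO.tilde σ T \ T := (hset.ge ⟨Fin.last s, rfl⟩).2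
  exact (statement13_general σ.injective.mem_periodicPts hp.one_le hβ).imp_left
    fun h => h _ (hpos _) (hlt _) hlast
end
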